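/- In the Golub–Kahan bidiagonalization setup (rectangular case m > n), for every k with 1 ≤ k ≤ n−1, the smallest singular value θ_k^{(k)} of B_k and the smallest singular value θ̄_k^{(k)} of B̄_k satisfy σ_n < θ_k^{(k)} < σ_k and 0 < θ̄_k^{(k)} < θ_k^{(k)} < σ_k. -/

import Mathlib

open Matrix

/-- Spectral norm (largest singular value) of a real matrix. -/
noncomputable def specNorm {a b : ℕ} (M : Matrix (Fin a) (Fin b) ℝ) : ℝ :=
  ‖LinearMap.toContinuousLinearMap (Matrix.toEuclideanLin M)‖

/-- The `j`-th largest singular value of a real matrix (`j ≥ 1`), characterized via the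
Eckart–Young theorem as the minimal spectral-norm distance to matrices of rank `< j`;
it is `0` when `j` exceeds the smaller dimension. -/
noncomputable def singVal {a b : ℕ} (M : Matrix (Fin a) (Fin b) ℝ) (j : ℕ) : ℝ :=
  sInf {r : ℝ | ∃ D : Matrix (Fin a) (Fin b) ℝ, D.rank < j ∧ r = specNorm (M - D)}

/-- The matrix of the first `k` columns of `M`. -/
def colSub {a b : ℕ} (M : Matrix (Fin a) (Fin b) ℝ) (k : ℕ) (hk : k ≤ b) :
    Matrix (Fin a) (Fin k) ℝ :=
  M.submatrix id fun j => ⟨j.1, lt_of_lt_of_le j.2 hk⟩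

/-- The leading `r × c` submatrix of `M`. -/
def subUL {a b : ℕ} (M : Matrix (Fin a) (Fin b) ℝ) (r c : ℕ) (hr : r ≤ a) (hc : c ≤ b) :
    Matrix (Fin r) (Fin c) ℝ :=
  M.submatrix (fun i => ⟨i.1, lt_of_lt_of_le i.2 hr⟩) (fun j => ⟨j.1, lt_of_lt_of_le j.2 hc⟩)

lemma gk_norm_sq {a : ℕ} (x : Fin a → ℝ) : ‖WithLp.toLp 2 x‖ ^ 2 = x ⬝ᵥ x := by
  rw [EuclideanSpace.norm_sq_eq]
  simp [dotProduct, sq]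

lemma gk_dot_nonneg {a : ℕ} (x : Fin a → ℝ) : 0 ≤ x ⬝ᵥ x := by
  rw [← gk_norm_sq]; positivity

lemma gk_dot_pos {a : ℕ} (x : Fin a → ℝ) (hx : x ≠ 0) : 0 < x ⬝ᵥ x := by
  rcases (gk_dot_nonneg x).lt_or_eq with h | h
  · exact h
  · exact absurd (dotProduct_self_eq_zero.1 h.symm) hx

lemma gk_le_specNorm {a b : ℕ} (M : Matrix (Fin a) (Fin b) ℝ) (x : Fin b → ℝ) :
    (M *ᵥ x) ⬝ᵥ (M *ᵥ x) ≤ specNorm M ^ 2 * (x ⬝ᵥ x) := by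
  have h := (LinearMap.toContinuousLinearMap (Matrix.toEuclideanLin M)).le_opNorm (WithLp.toLp 2 x)
  rw [← gk_norm_sq, ← gk_norm_sq, ← mul_pow]
  apply pow_le_pow_left₀ (norm_nonneg _)
  simpa [specNorm] using h

lemma gk_specNorm_nonneg {a b : ℕ} (M : Matrix (Fin a) (Fin b) ℝ) : 0 ≤ specNorm M :=
  norm_nonneg _

lemma gk_specNorm_le {a b : ℕ} (M : Matrix (Fin a) (Fin b) ℝ) (c : ℝ) (hc : 0 ≤ c)
    (h : ∀ x, (M *ᵥ x) ⬝ᵥ (M *ᵥ x) ≤ c ^ 2 * (x ⬝ᵥ x)) : specNorm M ≤ c := by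
  refine ContinuousLinearMap.opNorm_le_bound _ hc fun x => ?_
  have := h x.ofLp
  rw [← gk_norm_sq, ← gk_norm_sq, ← mul_pow] at this
  have := le_of_sq_le_sq this (by positivity)
  exact this

lemma gk_singVal_nonneg {a b : ℕ} (M : Matrix (Fin a) (Fin b) ℝ) (j : ℕ) : 0 ≤ singVal M j := by
  apply Real.sInf_nonneg
  rintro r ⟨D, _, rfl⟩
  exact gk_specNorm_nonneg _

lemma gk_exists_ker {a k : ℕ} (D : Matrix (Fin a) (Fin k) ℝ) (h : D.rank < k) :
    ∃ x : Fin k → ℝ, x ≠ 0 ∧ D *ᵥ x = 0 := by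
  by_contra! hc
  have hinj : Function.Injective D.mulVecLin := by
    rw [← LinearMap.ker_eq_bot, LinearMap.ker_eq_bot']
    intro x hx
    by_contra hne
    exact hc x hne hx
  have := LinearMap.finrank_range_of_inj hinj
  rw [Matrix.rank] at h
  simp at this
  omega

lemma gk_exists_min {k : ℕ} (hk : 1 ≤ k) (f : (Fin k → ℝ) → ℝ) (hf : Continuous f) :
    ∃ y : Fin k → ℝ, y ⬝ᵥ y = 1 ∧ ∀ x, x ⬝ᵥ x = 1 → f y ≤ f x := by
  have : Nontrivial (EuclideanSpace ℝ (Fin k)) := by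
    have : Nonempty (Fin k) := ⟨⟨0, hk⟩⟩
    infer_instance
  have hc : IsCompact (Metric.sphere (0 : EuclideanSpace ℝ (Fin k)) 1) := isCompact_sphere 0 1
  have hne : (Metric.sphere (0 : EuclideanSpace ℝ (Fin k)) 1).Nonempty :=
    NormedSpace.sphere_nonempty.2 zero_le_one
  obtain ⟨y, hy, hmin⟩ := hc.exists_isMinOn hne
    (f := fun v => f v.ofLp) (by fun_prop)
  refine ⟨y.ofLp, ?_, fun x hx => ?_⟩
  · rw [← gk_norm_sq]
    have hy' : ‖y‖ = 1 := by simpa using hy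
    change ‖y‖ ^ 2 = 1
    rw [hy']; norm_num
  · have hx' : WithLp.toLp 2 x ∈ Metric.sphere (0 : EuclideanSpace ℝ (Fin k)) 1 := by
      have h1 := gk_norm_sq x
      rw [hx] at h1
      simpa using (pow_eq_one_iff_of_nonneg (norm_nonneg _) two_ne_zero).1 h1
    exact hmin hx'

lemma gk_smul_quad {a k : ℕ} (N : Matrix (Fin a) (Fin k) ℝ) (c : ℝ) (x : Fin k → ℝ) :
    (N *ᵥ (c • x)) ⬝ᵥ (N *ᵥ (c • x)) = c ^ 2 * ((N *ᵥ x) ⬝ᵥ (N *ᵥ x)) := by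
  simp [mulVec_smul]; ring

lemma gk_normalize {k : ℕ} (x : Fin k → ℝ) (hx : x ≠ 0) :
    ∃ c : ℝ, 0 < c ∧ (c • x) ⬝ᵥ (c • x) = 1 ∧ c ^ 2 * (x ⬝ᵥ x) = 1 := by
  have h := gk_dot_pos x hx
  have h1 : (Real.sqrt (x ⬝ᵥ x))⁻¹ ^ 2 * (x ⬝ᵥ x) = 1 := by
    rw [inv_pow, Real.sq_sqrt h.le]; field_simp
  refine ⟨(Real.sqrt (x ⬝ᵥ x))⁻¹, by positivity, ?_, h1⟩
  simp only [smul_dotProduct, dotProduct_smul, smul_eq_mul]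
  rw [← h1]; ring

lemma gk_lower {a b k : ℕ} (hk : 1 ≤ k) (M : Matrix (Fin a) (Fin b) ℝ)
    (L : Matrix (Fin b) (Fin k) ℝ) (θ : ℝ) (hθ : 0 ≤ θ)
    (h : ∀ x : Fin k → ℝ, x ≠ 0 →
      θ ^ 2 * ((L *ᵥ x) ⬝ᵥ (L *ᵥ x)) < (M *ᵥ (L *ᵥ x)) ⬝ᵥ (M *ᵥ (L *ᵥ x))) :
    θ < singVal M k := by
  obtain ⟨y, hy, hmin⟩ := gk_exists_min hk
    (fun x => (M *ᵥ (L *ᵥ x)) ⬝ᵥ (M *ᵥ (L *ᵥ x)) - θ ^ 2 * ((L *ᵥ x) ⬝ᵥ (L *ᵥ x)))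
    (by fun_prop)
  have hy0 : y ≠ 0 := by rintro rfl; simp at hy
  set δ := (M *ᵥ (L *ᵥ y)) ⬝ᵥ (M *ᵥ (L *ᵥ y)) - θ ^ 2 * ((L *ᵥ y) ⬝ᵥ (L *ᵥ y)) with hδ
  have hδ0 : 0 < δ := sub_pos.2 (h y hy0)
  set C := specNorm L ^ 2 + 1 with hC
  have hC0 : 0 < C := by positivity
  have key : ∀ D : Matrix (Fin a) (Fin b) ℝ, D.rank < k →
      Real.sqrt (θ ^ 2 + δ / C) ≤ specNorm (M - D) := by
    intro D hD
    obtain ⟨x, hx0, hx⟩ := gk_exists_ker (D * L) ((Matrix.rank_mul_le_left D L).trans_lt hD)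
    obtain ⟨c, hc, hu, -⟩ := gk_normalize x hx0
    set u := c • x with hu'
    have hDu : D *ᵥ (L *ᵥ u) = 0 := by
      rw [mulVec_mulVec, hu', mulVec_smul, hx, smul_zero]
    have hu0 : u ≠ 0 := by rintro h0; rw [h0] at hu; simp at hu
    have h1 := gk_le_specNorm (M - D) (L *ᵥ u)
    rw [sub_mulVec, hDu, sub_zero] at h1
    have h2 := hmin u hu
    have h3 := gk_le_specNorm L u
    rw [hu, mul_one] at h3
    have h4 := gk_dot_nonneg (L *ᵥ u)
    have h5 : 0 < (L *ᵥ u) ⬝ᵥ (L *ᵥ u) := by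
      apply gk_dot_pos
      intro h0
      have := h u hu0
      simp [h0] at this
    apply Real.sqrt_le_iff.2 ⟨gk_specNorm_nonneg _, ?_⟩
    have h6 : δ / C * ((L *ᵥ u) ⬝ᵥ (L *ᵥ u)) ≤ δ := by
      rw [div_mul_eq_mul_div, div_le_iff₀ hC0]
      apply mul_le_mul_of_nonneg_left _ hδ0.le
      linarith
    have h7 : (θ ^ 2 + δ / C) * ((L *ᵥ u) ⬝ᵥ (L *ᵥ u)) ≤
        specNorm (M - D) ^ 2 * ((L *ᵥ u) ⬝ᵥ (L *ᵥ u)) := by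
      have h2' : δ ≤ _ := h2
      linarith
    exact le_of_mul_le_mul_right h7 h5
  have h8 : Real.sqrt (θ ^ 2 + δ / C) ≤ singVal M k := by
    apply le_csInf
    · exact ⟨_, 0, by rw [Matrix.rank_zero]; omega, rfl⟩
    · rintro r ⟨D, hD, rfl⟩
      exact key D hD
  refine lt_of_lt_of_le ?_ h8
  apply Real.lt_sqrt_of_sq_lt
  have : 0 < δ / C := by positivity
  linarith

lemma gk_upper {a b : ℕ} (M : Matrix (Fin a) (Fin b) ℝ) (x : Fin b → ℝ) (hx : x ≠ 0) :
    singVal M b ^ 2 * (x ⬝ᵥ x) ≤ (M *ᵥ x) ⬝ᵥ (M *ᵥ x) := by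
  obtain ⟨c, hc, hu, hcx⟩ := gk_normalize x hx
  set u := c • x with hu'
  have hMu : (M *ᵥ u) ⬝ᵥ (M *ᵥ u) = c ^ 2 * ((M *ᵥ x) ⬝ᵥ (M *ᵥ x)) := gk_smul_quad M c x
  have hu0 : u ≠ 0 := by rintro h0; rw [h0] at hu; simp at hu
  have hE : ∀ z, (vecMulVec (M *ᵥ u) u) *ᵥ z = (u ⬝ᵥ z) • (M *ᵥ u) := by
    intro z
    ext i
    simp [vecMulVec_mulVec, mul_comm]
  have hDu : (M - vecMulVec (M *ᵥ u) u) *ᵥ u = 0 := by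
    rw [sub_mulVec, hE, hu, one_smul, sub_self]
  have hrank : (M - vecMulVec (M *ᵥ u) u).rank < b := by
    have h1 := LinearMap.finrank_range_add_finrank_ker (M - vecMulVec (M *ᵥ u) u).mulVecLin
    have h2 : 0 < Module.finrank ℝ (LinearMap.ker (M - vecMulVec (M *ᵥ u) u).mulVecLin) := by
      rw [Module.finrank_pos_iff_exists_ne_zero]
      refine ⟨⟨u, hDu⟩, ?_⟩
      simpa [Subtype.ext_iff] using hu0
    rw [Matrix.rank]
    simp at h1
    omega
  have hle : singVal M b ≤ Real.sqrt ((M *ᵥ u) ⬝ᵥ (M *ᵥ u)) := by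
    have h1 : singVal M b ≤ specNorm (M - (M - vecMulVec (M *ᵥ u) u)) := by
      apply csInf_le
      · refine ⟨0, ?_⟩
        rintro r ⟨D, _, rfl⟩
        exact gk_specNorm_nonneg _
      · exact ⟨_, hrank, rfl⟩
    refine h1.trans ?_
    rw [sub_sub_cancel]
    apply gk_specNorm_le _ _ (Real.sqrt_nonneg _)
    intro z
    rw [hE, Real.sq_sqrt (gk_dot_nonneg _)]
    simp only [smul_dotProduct, dotProduct_smul, smul_eq_mul]
    have hcs : (u ⬝ᵥ z) ^ 2 ≤ z ⬝ᵥ z := by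
      have := gk_dot_nonneg (z - (u ⬝ᵥ z) • u)
      simp only [sub_dotProduct, dotProduct_sub, smul_dotProduct, dotProduct_smul,
        smul_eq_mul, hu, dotProduct_comm z u] at this
      nlinarith
    nlinarith [gk_dot_nonneg (M *ᵥ u)]
  have hsq : singVal M b ^ 2 ≤ (M *ᵥ u) ⬝ᵥ (M *ᵥ u) := by
    rw [← Real.sq_sqrt (gk_dot_nonneg (M *ᵥ u))]
    exact pow_le_pow_left₀ (gk_singVal_nonneg _ _) hle 2
  rw [hMu] at hsq
  have hc2 : 0 < c ^ 2 := by positivity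
  have : c ^ 2 * (singVal M b ^ 2 * (x ⬝ᵥ x)) ≤ c ^ 2 * ((M *ᵥ x) ⬝ᵥ (M *ᵥ x)) := by
    calc _ = singVal M b ^ 2 * (c ^ 2 * (x ⬝ᵥ x)) := by ring
      _ ≤ _ := by rw [hcx, mul_one]; exact hsq
  exact le_of_mul_le_mul_left this hc2

lemma gk_upper' {a b : ℕ} (M : Matrix (Fin a) (Fin b) ℝ) (x : Fin b → ℝ) :
    singVal M b ^ 2 * (x ⬝ᵥ x) ≤ (M *ᵥ x) ⬝ᵥ (M *ᵥ x) := by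
  by_cases hx : x = 0
  · simp [hx]
  · exact gk_upper M x hx

lemma gk_attained {a b : ℕ} (hb : 1 ≤ b) (M : Matrix (Fin a) (Fin b) ℝ) :
    ∃ y : Fin b → ℝ, y ≠ 0 ∧ (M *ᵥ y) ⬝ᵥ (M *ᵥ y) ≤ singVal M b ^ 2 * (y ⬝ᵥ y) := by
  by_contra! hc
  have := gk_lower hb M 1 (singVal M b) (gk_singVal_nonneg _ _) (by
    intro x hx
    simpa using hc x hx)
  exact lt_irrefl _ this

lemma gk_quad {a b : ℕ} (M : Matrix (Fin a) (Fin b) ℝ) (x y : Fin b → ℝ) :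
    (M *ᵥ x) ⬝ᵥ (M *ᵥ y) = x ⬝ᵥ ((Mᵀ * M) *ᵥ y) := by
  rw [← mulVec_mulVec, dotProduct_mulVec x, vecMul_transpose]

lemma gk_eigen {a b : ℕ} (M : Matrix (Fin a) (Fin b) ℝ) (s : ℝ)
    (h : ∀ x, s * (x ⬝ᵥ x) ≤ (M *ᵥ x) ⬝ᵥ (M *ᵥ x)) (y : Fin b → ℝ)
    (hy : (M *ᵥ y) ⬝ᵥ (M *ᵥ y) ≤ s * (y ⬝ᵥ y)) : (Mᵀ * M) *ᵥ y = s • y := by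
  set g := (Mᵀ * M) *ᵥ y - s • y with hg
  have hexp : ∀ t : ℝ, 0 ≤ 2 * t * (g ⬝ᵥ g) + t ^ 2 * ((M *ᵥ g) ⬝ᵥ (M *ᵥ g) - s * (g ⬝ᵥ g)) := by
    intro t
    have h1 := h (y + t • g)
    have h2 : (M *ᵥ g) ⬝ᵥ (M *ᵥ y) - s * (g ⬝ᵥ y) = g ⬝ᵥ g := by
      rw [gk_quad]
      conv_rhs => rhs; rw [hg]
      simp [dotProduct_sub]
    simp only [mulVec_add, mulVec_smul, add_dotProduct, dotProduct_add, smul_dotProduct,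
      dotProduct_smul, smul_eq_mul, dotProduct_comm (M *ᵥ y) (M *ᵥ g), dotProduct_comm y g] at h1
    have h3 : 2 * t * (g ⬝ᵥ g) = 2 * t * ((M *ᵥ g) ⬝ᵥ (M *ᵥ y) - s * (g ⬝ᵥ y)) := by rw [h2]
    rw [h3]
    linarith
  set G := g ⬝ᵥ g with hG
  set R := (M *ᵥ g) ⬝ᵥ (M *ᵥ g) - s * G with hR
  have hG0 : 0 ≤ G := gk_dot_nonneg g
  have hR0 : 0 ≤ R := sub_nonneg.2 (h g)
  have hGz : G = 0 := by
    have h1 := hexp (-(G / (R + 1)))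
    have h2 : 0 < R + 1 := by linarith
    have h3 : 2 * -(G / (R + 1)) * G + (-(G / (R + 1))) ^ 2 * R =
        - (G ^ 2 * (R + 2)) / (R + 1) ^ 2 := by field_simp; ring
    rw [h3, le_div_iff₀ (by positivity)] at h1
    nlinarith [sq_nonneg G, mul_nonneg (sq_nonneg G) hR0]
  have : g = 0 := dotProduct_self_eq_zero.1 hGz
  exact sub_eq_zero.1 this

/-- lower bidiagonal -/
def gkBidiag {n : ℕ} (B : Matrix (Fin (n + 1)) (Fin n) ℝ) : Prop :=
  (∀ (i : Fin (n + 1)) (j : Fin n), (i : ℕ) = (j : ℕ) → 0 < B i j) ∧ (∀ (i : Fin (n + 1)) (j : Fin n), (i : ℕ) = (j : ℕ) + 1 → 0 < B i j) ∧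
  ∀ (i : Fin (n + 1)) (j : Fin n), (i : ℕ) ≠ (j : ℕ) → (i : ℕ) ≠ (j : ℕ) + 1 → B i j = 0

lemma gk_tridiag {n : ℕ} (B : Matrix (Fin (n + 1)) (Fin n) ℝ) (hB : gkBidiag B)
    (s : ℝ) (x : Fin n → ℝ) (h : (Bᵀ * B) *ᵥ x = s • x)
    (hlast : ∀ j : Fin n, (j : ℕ) + 1 = n → x j = 0) : x = 0 := by
  obtain ⟨h1, h2, h3⟩ := hB
  have key : ∀ d : ℕ, ∀ j : Fin n, n ≤ (j : ℕ) + 1 + d → x j = 0 := by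
    intro d
    induction d with
    | zero => intro j hj; exact hlast j (by omega)
    | succ d ih =>
      intro l hl
      by_cases hl' : n ≤ (l : ℕ) + 1 + d
      · exact ih l hl'
      by_cases hln : (l : ℕ) + 1 = n
      · exact hlast l hln
      have hjn : (l : ℕ) + 1 < n := by omega
      set j : Fin n := ⟨l + 1, hjn⟩ with hj
      have hxj : ∀ i : Fin n, l < i → x i = 0 := by
        intro i hi
        apply ih i
        have : (l : ℕ) < i := hi
        omega
      have e := congrFun h j
      rw [Pi.smul_apply, hxj j (by rw [Fin.lt_def]; simp [hj]), smul_zero, mulVec, dotProduct,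
        Finset.sum_eq_single l] at e
      · rcases mul_eq_zero.1 e with e | e
        · exfalso
          rw [mul_apply, Finset.sum_eq_single ⟨l + 1, by omega⟩] at e
          · have a1 := h1 ⟨l + 1, by omega⟩ j rfl
            have a2 := h2 ⟨l + 1, by omega⟩ l rfl
            rw [transpose_apply] at e
            exact (mul_pos a1 a2).ne' e
          · intro i _ hi
            have hi' : (i : ℕ) ≠ l + 1 := fun h => hi (Fin.ext h)
            rw [transpose_apply]
            by_cases hil : (i : ℕ) = l
            · rw [h3 i j (by simp [hj]; omega) (by simp [hj]; omega), zero_mul]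
            · rw [h3 i l hil hi', mul_zero]
          · simp
        · exact e
      · intro i _ hi
        have hi' : (i : ℕ) ≠ l := fun h => hi (Fin.ext h)
        by_cases hil : l < i
        · rw [hxj i hil, mul_zero]
        · rw [Fin.lt_def] at hil
          rw [mul_apply, Finset.sum_eq_zero, zero_mul]
          intro r _
          rw [transpose_apply]
          by_cases hr : (r : ℕ) = i ∨ (r : ℕ) = i + 1
          · rw [h3 r j (by simp [hj]; omega) (by simp [hj]; omega), zero_mul]
          · push Not at hr
            rw [h3 r i hr.1 hr.2, mul_zero]
      · simp
  ext j
  exact key n j (by omega)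

lemma gk_isom {a b : ℕ} (P : Matrix (Fin a) (Fin b) ℝ) (hP : Pᵀ * P = 1) (x : Fin b → ℝ) :
    (P *ᵥ x) ⬝ᵥ (P *ᵥ x) = x ⬝ᵥ x := by
  rw [gk_quad, hP, one_mulVec]

/-- zero padding -/
def gkPad (n k : ℕ) : Matrix (Fin n) (Fin k) ℝ := fun i j => if (i : ℕ) = (j : ℕ) then 1 else 0

lemma gk_pad_mul {a n k : ℕ} (hk : k ≤ n) (B : Matrix (Fin a) (Fin n) ℝ) :
    B * gkPad n k = B.submatrix id (Fin.castLE hk) := by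
  ext i j
  rw [mul_apply, Finset.sum_eq_single (Fin.castLE hk j)]
  · simp [gkPad]
  · intro l _ hl
    have : (l : ℕ) ≠ j := fun h => hl (Fin.ext h)
    simp [gkPad, this]
  · simp

lemma gk_pad_isom {n k : ℕ} (hk : k ≤ n) : (gkPad n k)ᵀ * gkPad n k = 1 := by
  rw [gk_pad_mul hk]
  ext i j
  simp [gkPad, one_apply, Fin.ext_iff, eq_comm]

lemma gk_pad_last {n k : ℕ} (y : Fin k → ℝ) (j : Fin n) (hj : k ≤ (j : ℕ)) :
    (gkPad n k *ᵥ y) j = 0 := by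
  rw [mulVec, dotProduct]
  apply Finset.sum_eq_zero
  intro i _
  have : (j : ℕ) ≠ i := by omega
  simp [gkPad, this]

lemma gk_sub_quad {n k : ℕ} (hk : k ≤ n) (B : Matrix (Fin (n + 1)) (Fin n) ℝ) (hB : gkBidiag B)
    (h1 : k + 1 ≤ n + 1) (y : Fin k → ℝ) :
    (B *ᵥ (gkPad n k *ᵥ y)) ⬝ᵥ (B *ᵥ (gkPad n k *ᵥ y)) =
      (subUL B (k + 1) k h1 hk *ᵥ y) ⬝ᵥ (subUL B (k + 1) k h1 hk *ᵥ y) := by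
  rw [mulVec_mulVec, gk_pad_mul hk]
  symm
  apply Fintype.sum_of_injective (Fin.castLE h1) (Fin.castLE_injective h1)
  · intro i hi
    have hi' : k + 1 ≤ (i : ℕ) := by
      by_contra hc
      exact hi ⟨⟨i, by omega⟩, rfl⟩
    have : ((B.submatrix id (Fin.castLE hk)) *ᵥ y) i = 0 := by
      rw [mulVec, dotProduct]
      apply Finset.sum_eq_zero
      intro j _
      rw [submatrix_apply, hB.2.2 _ _ (by simp; omega) (by simp; omega), zero_mul]
    rw [this, zero_mul]
  · intro i
    rfl

lemma gk_sub_bidiag {n k : ℕ} (hk : k ≤ n) (B : Matrix (Fin (n + 1)) (Fin n) ℝ) (hB : gkBidiag B)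
    (h1 : k + 1 ≤ n + 1) : gkBidiag (subUL B (k + 1) k h1 hk) :=
  ⟨fun _ _ h => hB.1 _ _ h, fun _ _ h => hB.2.1 _ _ h, fun _ _ h h' => hB.2.2 _ _ h h'⟩

lemma gk_bar_quad {n k : ℕ} (hk1 : 1 ≤ k) (hk : k ≤ n) (B : Matrix (Fin (n + 1)) (Fin n) ℝ)
    (hB : gkBidiag B) (h1 : k + 1 ≤ n + 1) (h2 : k ≤ n + 1) (y : Fin k → ℝ) :
    (subUL B (k + 1) k h1 hk *ᵥ y) ⬝ᵥ (subUL B (k + 1) k h1 hk *ᵥ y) =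
      (subUL B k k h2 hk *ᵥ y) ⬝ᵥ (subUL B k k h2 hk *ᵥ y) +
      (B ⟨k, by omega⟩ ⟨k - 1, by omega⟩ * y ⟨k - 1, by omega⟩) ^ 2 := by
  have e : (subUL B (k + 1) k h1 hk *ᵥ y) (Fin.last k) =
      B ⟨k, by omega⟩ ⟨k - 1, by omega⟩ * y ⟨k - 1, by omega⟩ := by
    rw [mulVec, dotProduct, Finset.sum_eq_single ⟨k - 1, by omega⟩]
    · rfl
    · intro j _ hj
      have hj' : (j : ℕ) ≠ k - 1 := fun h => hj (Fin.ext h)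
      have := j.2
      rw [(gk_sub_bidiag hk B hB h1).2.2 _ _ (by simp; omega) (by simp; omega), zero_mul]
    · simp
  rw [← e]
  conv_lhs => rw [dotProduct, Fin.sum_univ_castSucc]
  rw [sq]
  rfl

lemma gk_bar_inj {n k : ℕ} (hk : k ≤ n) (B : Matrix (Fin (n + 1)) (Fin n) ℝ)
    (hB : gkBidiag B) (h2 : k ≤ n + 1) (y : Fin k → ℝ) (hy : subUL B k k h2 hk *ᵥ y = 0) :
    y = 0 := by
  have hdet : (subUL B k k h2 hk).det ≠ 0 := by
    rw [det_of_isLowerTriangular]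
    · exact (Finset.prod_pos fun i _ => hB.1 _ _ rfl).ne'
    · intro i j hij
      have : (i : ℕ) < j := by simpa using hij
      exact hB.2.2 _ _ (by simp; omega) (by simp; omega)
  exact eq_zero_of_mulVec_eq_zero hdet hy

/-- in the rectangular case `m > n`, the smallest singular values satisfy
`σ_n < θ_k^{(k)} < σ_k` and `0 < θ̄_k^{(k)} < θ_k^{(k)} < σ_k` for `1 ≤ k ≤ n-1`. -/
theorem smallest_singularValues_Bk_Bbark_bounds_rectangular
    (m n : ℕ) (hn : 2 ≤ n) (hmn : n < m)
    (A : Matrix (Fin m) (Fin n) ℝ)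
    (P : Matrix (Fin m) (Fin (n + 1)) ℝ) (hP : Pᵀ * P = 1)
    (Q : Matrix (Fin n) (Fin n) ℝ) (hQ : Qᵀ * Q = 1)
    (α : Fin n → ℝ) (hα : ∀ i, 0 < α i)
    (β : Fin n → ℝ) (hβ : ∀ i, 0 < β i)
    (B : Matrix (Fin (n + 1)) (Fin n) ℝ)
    (hB : ∀ (i : Fin (n + 1)) (j : Fin n),
      B i j = if (i : ℕ) = (j : ℕ) then α j
        else if (i : ℕ) = (j : ℕ) + 1 then β j else 0)
    (hA : A = P * B * Qᵀ)
    (σ : Fin n → ℝ) (hσpos : ∀ i, 0 < σ i)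
    (hσstrict : ∀ i j : Fin n, i < j → σ j < σ i)
    (hσ : ∀ i : Fin n, σ i = singVal A ((i : ℕ) + 1))
    (k : ℕ) (hk1 : 1 ≤ k) (hk2 : k ≤ n - 1) :
    σ ⟨n - 1, by omega⟩ < singVal (subUL B (k + 1) k (by omega) (by omega)) k ∧
    singVal (subUL B (k + 1) k (by omega) (by omega)) k < σ ⟨k - 1, by omega⟩ ∧
    0 < singVal (subUL B k k (by omega) (by omega)) k ∧
    singVal (subUL B k k (by omega) (by omega)) k <
      singVal (subUL B (k + 1) k (by omega) (by omega)) k := by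
  have hkn : k ≤ n := by omega
  have hBi : gkBidiag B := by
    refine ⟨fun i j h => ?_, fun i j h => ?_, fun i j h h' => ?_⟩
    · rw [hB, if_pos h]; exact hα j
    · rw [hB, if_neg (by omega), if_pos h]; exact hβ j
    · rw [hB, if_neg h, if_neg h']
  set Bk := subUL B (k + 1) k (by omega) (by omega) with hBk
  set Bb := subUL B k k (by omega) (by omega) with hBb
  have hBkb : gkBidiag Bk := gk_sub_bidiag hkn B hBi (by omega)
  set θ := singVal Bk k with hθ
  have hθ0 : 0 ≤ θ := gk_singVal_nonneg _ _
  obtain ⟨y, hy0, hy⟩ := gk_attained hk1 Bk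
  have hAQ : ∀ z, (A *ᵥ (Q *ᵥ z)) ⬝ᵥ (A *ᵥ (Q *ᵥ z)) = (B *ᵥ z) ⬝ᵥ (B *ᵥ z) := by
    intro z
    have : A *ᵥ (Q *ᵥ z) = P *ᵥ (B *ᵥ z) := by
      rw [mulVec_mulVec, mulVec_mulVec, hA, Matrix.mul_assoc, hQ, Matrix.mul_one]
    rw [this, gk_isom P hP]
  have hpad : ∀ z : Fin k → ℝ, (gkPad n k *ᵥ z) ⬝ᵥ (gkPad n k *ᵥ z) = z ⬝ᵥ z :=
    gk_isom _ (gk_pad_isom hkn)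
  have hpad0 : ∀ (z : Fin k → ℝ) (s : ℝ),
      (Bᵀ * B) *ᵥ (gkPad n k *ᵥ z) = s • (gkPad n k *ᵥ z) → z = 0 := by
    intro z s h
    have h0 := gk_tridiag B hBi s _ h (fun j hj => gk_pad_last z j (by omega))
    have := hpad z
    rw [h0] at this
    simp at this
    exact dotProduct_self_eq_zero.1 this.symm
  have hq : ∀ z : Fin k → ℝ, (B *ᵥ (gkPad n k *ᵥ z)) ⬝ᵥ (B *ᵥ (gkPad n k *ᵥ z)) =
      (Bk *ᵥ z) ⬝ᵥ (Bk *ᵥ z) := gk_sub_quad hkn B hBi (by omega)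
  refine ⟨?_, ?_, ?_, ?_⟩
  · by_contra! hc
    rw [hσ] at hc
    have hnn : n - 1 + 1 = n := by omega
    simp only [hnn] at hc
    have hsq : θ ^ 2 ≤ singVal A n ^ 2 := pow_le_pow_left₀ hθ0 hc 2
    have hall : ∀ z, singVal A n ^ 2 * (z ⬝ᵥ z) ≤ (B *ᵥ z) ⬝ᵥ (B *ᵥ z) := by
      intro z
      have := gk_upper' A (Q *ᵥ z)
      rwa [hAQ, gk_isom Q hQ] at this
    refine hy0 (hpad0 y _ (gk_eigen B _ hall _ ?_))
    rw [hq, hpad]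
    exact hy.trans (mul_le_mul_of_nonneg_right hsq (gk_dot_nonneg y))
  · rw [hσ]
    have hkk : k - 1 + 1 = k := by omega
    simp only [hkk]
    apply gk_lower hk1 A (Q * ((Bᵀ * B) * gkPad n k)) θ hθ0
    intro x hx
    rw [← mulVec_mulVec, ← mulVec_mulVec, hAQ, gk_isom Q hQ]
    set v := gkPad n k *ᵥ x with hv
    set w := (Bᵀ * B) *ᵥ v with hw
    by_contra! hc
    apply hx
    apply hpad0 x (θ ^ 2)
    rw [← hv, ← hw, ← sub_eq_zero, ← dotProduct_self_eq_zero]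
    have hvv : θ ^ 2 * (v ⬝ᵥ v) ≤ (B *ᵥ v) ⬝ᵥ (B *ᵥ v) := by
      rw [hv, hq, hpad]
      exact gk_upper' Bk x
    have hwv : w ⬝ᵥ v = (B *ᵥ v) ⬝ᵥ (B *ᵥ v) := by
      rw [gk_quad, ← hw, dotProduct_comm]
    have hww : w ⬝ᵥ w = (B *ᵥ w) ⬝ᵥ (B *ᵥ v) := by
      rw [gk_quad B w v]
    have hsq := gk_dot_nonneg (B *ᵥ w - (θ ^ 2) • (B *ᵥ v))
    simp only [sub_dotProduct, dotProduct_sub, smul_dotProduct, dotProduct_smul, smul_eq_mul,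
      dotProduct_comm (B *ᵥ v) (B *ᵥ w), ← hww] at hsq
    have hge := gk_dot_nonneg (w - (θ ^ 2) • v)
    apply le_antisymm _ hge
    simp only [sub_dotProduct, dotProduct_sub, smul_dotProduct, dotProduct_smul, smul_eq_mul,
      dotProduct_comm v w, hwv]
    have hW : w ⬝ᵥ w ≤ θ ^ 2 * ((B *ᵥ v) ⬝ᵥ (B *ᵥ v)) := by
      rcases hθ0.eq_or_lt with h0 | h0
      · rw [← h0] at hc ⊢
        have h1 : B *ᵥ w = 0 := by
          apply dotProduct_self_eq_zero.1
          apply le_antisymm _ (gk_dot_nonneg _)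
          simpa using hc
        rw [hww, h1]
        simp
      · have h1 : θ ^ 2 * (w ⬝ᵥ w) ≤ θ ^ 2 * (θ ^ 2 * ((B *ᵥ v) ⬝ᵥ (B *ᵥ v))) := by linarith
        exact le_of_mul_le_mul_left h1 (by positivity)
    have hV := mul_le_mul_of_nonneg_left hvv (sq_nonneg θ)
    linarith
  · apply gk_lower hk1 Bb 1 0 le_rfl
    intro x hx
    rw [one_mulVec]
    have : 0 < (Bb *ᵥ x) ⬝ᵥ (Bb *ᵥ x) :=
      gk_dot_pos _ fun h => hx (gk_bar_inj hkn B hBi (by omega) x h)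
    simpa using this
  · by_contra! hc
    have hsq : θ ^ 2 ≤ singVal Bb k ^ 2 := pow_le_pow_left₀ hθ0 hc 2
    have h1 := gk_upper' Bb y
    have h2 := gk_bar_quad hk1 hkn B hBi (by omega) (by omega) y
    have h3 := mul_le_mul_of_nonneg_right hsq (gk_dot_nonneg y)
    rw [← hBk, ← hBb] at h2
    have h4 : (B ⟨k, by omega⟩ ⟨k - 1, by omega⟩ * y ⟨k - 1, by omega⟩) ^ 2 ≤ 0 := by linarith
    have h5 := pow_eq_zero_iff two_ne_zero |>.1 (le_antisymm h4 (sq_nonneg _))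
    have h6 : y ⟨k - 1, by omega⟩ = 0 := by
      rcases mul_eq_zero.1 h5 with h | h
      · exact absurd h (hBi.2.1 _ _ (by simp; omega)).ne'
      · exact h
    refine hy0 (gk_tridiag Bk hBkb _ y (gk_eigen Bk _ (gk_upper' Bk) y hy) ?_)
    intro j hj
    have : j = ⟨k - 1, by omega⟩ := Fin.ext (by simp; omega)
    rw [this, h6]
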